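/- Let W ⊆ ⟦𝕐⟧ satisfy μH^{1/2}(W) < √(1/2), where μH^{1/2} denotes the (1/2)-dimensional Hausdorff outer measure with respect to the metric d₂. Then Player II has a winning pure strategy in the binary Gale–Stewart game with target set W; in particular, the game with target set W is determined. -/

import Mathlib

open Metric Set Filter MeasureTheory

noncomputable local instance : MetricSpace (ℕ → Bool) := PiNat.metricSpace
local instance (priority := high) : MeasurableSpace (ℕ → Bool) := borel _
local instance : BorelSpace (ℕ → Bool) := ⟨rfl⟩

/-- The finite prefix `⟨x 0, …, x (n-1)⟩` of a play. -/
def prefixList (x : ℕ → Bool) (n : ℕ) : List Bool := List.ofFn fun i : Fin n => x i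

/-- `x` is a play consistent with the Player I pure strategy `sI`. -/
def ConsistentI (sI : List Bool → Bool) (x : ℕ → Bool) : Prop :=
  ∀ n : ℕ, Even n → x n = sI (prefixList x n)

/-- `x` is a play consistent with the Player II pure strategy `sII`. -/
def ConsistentII (sII : List Bool → Bool) (x : ℕ → Bool) : Prop :=
  ∀ n : ℕ, Odd n → x n = sII (prefixList x n)

open scoped ENNReal

@[simp]
theorem length_prefixList (x : ℕ → Bool) (n : ℕ) : (prefixList x n).length = n := by
  simp [prefixList]

theorem prefixList_succ (x : ℕ → Bool) (n : ℕ) :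
    prefixList x (n + 1) = prefixList x n ++ [x n] := by
  rw [prefixList, List.ofFn_succ', List.concat_eq_append]
  rfl

theorem prefixList_congr {x y : ℕ → Bool} {n : ℕ} (h : ∀ i < n, x i = y i) :
    prefixList x n = prefixList y n := by
  unfold prefixList
  congr 1
  ext i
  exact h i i.2

/-- The total weight of those points among the `a i`, with weights `w i`, that extend `l`. -/
noncomputable def prefixMass (a : ℕ → ℕ → Bool) (w : ℕ → ℝ≥0∞) (l : List Bool) : ℝ≥0∞ :=
  ∑' i, if prefixList (a i) l.length = l then w i else 0

section prefixMass

variable (a : ℕ → ℕ → Bool) (w : ℕ → ℝ≥0∞)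

@[simp]
theorem prefixMass_nil : prefixMass a w [] = ∑' i, w i := by
  simp [prefixMass, prefixList]

theorem prefixMass_append_add (l : List Bool) :
    prefixMass a w (l ++ [true]) + prefixMass a w (l ++ [false]) = prefixMass a w l := by
  unfold prefixMass
  rw [← ENNReal.tsum_add]
  congr 1
  ext i
  simp only [List.length_append, List.length_singleton, prefixList_succ]
  cases h : a i l.length <;> by_cases hl : prefixList (a i) l.length = l <;> simp [hl]

theorem prefixMass_append_le (l : List Bool) (b : Bool) :
    prefixMass a w (l ++ [b]) ≤ prefixMass a w l := by
  rw [← prefixMass_append_add a w l]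
  cases b
  · exact le_add_self
  · exact le_self_add

theorem le_prefixMass {x : ℕ → Bool} {i m : ℕ} (h : ∀ j < m, a i j = x j) :
    w i ≤ prefixMass a w (prefixList x m) := by
  refine le_trans ?_ (ENNReal.le_tsum i)
  simp [prefixList_congr h]

/-- The strategy that moves to the extension of smaller mass. -/
noncomputable def minMassStrategy (l : List Bool) : Bool :=
  open Classical in decide (prefixMass a w (l ++ [true]) ≤ prefixMass a w (l ++ [false]))

theorem two_mul_prefixMass_minMassStrategy_le (l : List Bool) :
    2 * prefixMass a w (l ++ [minMassStrategy a w l]) ≤ prefixMass a w l := by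
  rw [two_mul, ← prefixMass_append_add a w l]
  by_cases h : prefixMass a w (l ++ [true]) ≤ prefixMass a w (l ++ [false])
  · rw [show minMassStrategy a w l = true by simpa [minMassStrategy] using h]
    gcongr
  · rw [show minMassStrategy a w l = false by simpa [minMassStrategy] using h]
    have := (not_le.1 h).le
    gcongr

theorem two_pow_mul_prefixMass_le {x : ℕ → Bool} (hx : ConsistentII (minMassStrategy a w) x)
    (k : ℕ) : 2 ^ k * prefixMass a w (prefixList x (2 * k)) ≤ ∑' i, w i := by
  induction k with
  | zero => simp [prefixList]
  | succ k ih =>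
    refine le_trans ?_ ih
    rw [show 2 * (k + 1) = 2 * k + 1 + 1 by ring, prefixList_succ x (2 * k + 1),
      hx (2 * k + 1) (odd_two_mul_add_one k), pow_succ, mul_assoc]
    gcongr
    refine (two_mul_prefixMass_minMassStrategy_le a w _).trans ?_
    rw [prefixList_succ]
    exact prefixMass_append_le a w _ _

end prefixMass

/-- The square root of `1 / 2` as an extended nonnegative real. -/
noncomputable def sqrtHalf : ℝ≥0∞ := ENNReal.ofReal (Real.sqrt (1 / 2))

theorem sqrtHalf_eq_rpow : sqrtHalf = (2⁻¹ : ℝ≥0∞) ^ (1 / 2 : ℝ) := by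
  rw [sqrtHalf, Real.sqrt_eq_rpow, ← ENNReal.ofReal_rpow_of_pos (by norm_num)]
  congr 1
  rw [one_div, ENNReal.ofReal_inv_of_pos (by norm_num), ENNReal.ofReal_ofNat]

theorem sqrtHalf_sq : sqrtHalf ^ 2 = 2⁻¹ := by
  rw [sqrtHalf_eq_rpow, ← ENNReal.rpow_natCast, ← ENNReal.rpow_mul]
  norm_num

theorem sqrtHalf_lt_one : sqrtHalf < 1 := by
  rw [sqrtHalf_eq_rpow]
  exact ENNReal.rpow_lt_one (by simp) (by norm_num)

theorem sqrtHalf_pow (n : ℕ) : sqrtHalf ^ n = ((2⁻¹ : ℝ≥0∞) ^ n) ^ (1 / 2 : ℝ) := by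
  rw [sqrtHalf_eq_rpow, ← ENNReal.rpow_natCast, ← ENNReal.rpow_natCast, ← ENNReal.rpow_mul,
    ← ENNReal.rpow_mul, mul_comm]

theorem two_pow_mul_sqrtHalf_pow (k : ℕ) : 2 ^ k * sqrtHalf ^ (2 * k) = 1 := by
  rw [pow_mul, sqrtHalf_sq, ← mul_pow, ENNReal.mul_inv_cancel (by simp) (by simp), one_pow]

theorem sqrtHalf_le_two_pow_mul (n : ℕ) : sqrtHalf ≤ 2 ^ (n / 2) * sqrtHalf ^ n := by
  rcases Nat.even_or_odd' n with ⟨k, rfl | rfl⟩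
  · rw [show 2 * k / 2 = k by omega, two_pow_mul_sqrtHalf_pow]
    exact sqrtHalf_lt_one.le
  · rw [show (2 * k + 1) / 2 = k by omega, pow_succ, ← mul_assoc, two_pow_mul_sqrtHalf_pow,
      one_mul]

/-- Player II can avoid a union of cylinders of lengths `n i` whenever
`∑ i, √(1/2) ^ n i < √(1/2)`. -/
theorem exists_strategy_avoiding_cylinders (a : ℕ → ℕ → Bool) (n : ℕ → ℕ)
    (h : ∑' i, sqrtHalf ^ n i < sqrtHalf) :
    ∃ sII : List Bool → Bool, ∀ x, ConsistentII sII x → ∀ i, x ∉ PiNat.cylinder (a i) (n i) := by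
  refine ⟨minMassStrategy a fun i => sqrtHalf ^ n i, fun x hx i hxi => h.not_ge ?_⟩
  calc sqrtHalf ≤ 2 ^ (n i / 2) * sqrtHalf ^ n i := sqrtHalf_le_two_pow_mul _
    _ ≤ 2 ^ (n i / 2) *
        prefixMass a (fun i => sqrtHalf ^ n i) (prefixList x (2 * (n i / 2))) := by
      gcongr
      exact le_prefixMass a (fun i => sqrtHalf ^ n i)
        fun j hj => (hxi j (hj.trans_le (Nat.mul_div_le _ _))).symm
    _ ≤ _ := two_pow_mul_prefixMass_le a _ hx _

theorem two_inv_pow_le_edist {x y : ℕ → Bool} {n : ℕ} (h : y ∉ PiNat.cylinder x (n + 1)) :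
    (2⁻¹ : ℝ≥0∞) ^ n ≤ edist y x := by
  have hne : y ≠ x := by
    rintro rfl
    exact h (PiNat.self_mem_cylinder _ _)
  rw [PiNat.mem_cylinder_iff_le_firstDiff hne, not_le, Nat.lt_succ_iff] at h
  rw [edist_dist, show dist y x = (1 / 2 : ℝ) ^ PiNat.firstDiff y x from PiNat.dist_eq_of_ne hne,
    ENNReal.ofReal_pow (by norm_num), one_div, ENNReal.ofReal_inv_of_pos (by norm_num),
    ENNReal.ofReal_ofNat]
  exact pow_le_pow_right_of_le_one' (by simp) h

theorem exists_cylinder_superset (t : Set (ℕ → Bool)) {ε : ℝ≥0∞} (hε : 0 < ε) :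
    ∃ (x : ℕ → Bool) (n : ℕ), t ⊆ PiNat.cylinder x n ∧
      sqrtHalf ^ n ≤ (⨆ _ : t.Nonempty, ediam t ^ (1 / 2 : ℝ)) + ε := by
  obtain ⟨N, hN⟩ : ∃ N : ℕ, sqrtHalf ^ N < ε :=
    ((ENNReal.tendsto_pow_atTop_nhds_zero_of_lt_one sqrtHalf_lt_one).eventually_lt_const hε).exists
  rcases t.eq_empty_or_nonempty with rfl | ⟨x, hx⟩
  · exact ⟨fun _ => true, N, empty_subset _, hN.le.trans le_add_self⟩
  by_cases hsub : ∀ n, t ⊆ PiNat.cylinder x n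
  · exact ⟨x, N, hsub N, hN.le.trans le_add_self⟩
  push Not at hsub
  classical
  obtain ⟨m, hm⟩ : ∃ m, Nat.find hsub = m + 1 := by
    refine Nat.exists_eq_succ_of_ne_zero fun h0 => Nat.find_spec hsub ?_
    rw [h0, PiNat.cylinder_zero]
    exact subset_univ t
  have hspec := Nat.find_spec hsub
  rw [hm] at hspec
  obtain ⟨y, hy, hyx⟩ := not_subset.1 hspec
  refine ⟨x, m, not_not.1 (Nat.find_min hsub (by omega)), le_add_right ?_⟩
  rw [ciSup_pos ⟨x, hx⟩, sqrtHalf_pow]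
  gcongr
  exact (two_inv_pow_le_edist hyx).trans (edist_le_ediam_of_mem hy hx)

theorem exists_cover_of_hausdorffMeasure_lt {W : Set (ℕ → Bool)} {c : ℝ≥0∞}
    (hW : μH[(1 / 2 : ℝ)] W < c) :
    ∃ (a : ℕ → ℕ → Bool) (n : ℕ → ℕ), W ⊆ ⋃ i, PiNat.cylinder (a i) (n i) ∧
      ∑' i, sqrtHalf ^ n i < c := by
  rw [Measure.hausdorffMeasure_apply] at hW
  have hcover := (le_iSup₂ (f := fun (r : ℝ≥0∞) (_ : 0 < r) =>
    ⨅ (t : ℕ → Set (ℕ → Bool)) (_ : W ⊆ ⋃ n, t n) (_ : ∀ n, ediam (t n) ≤ r),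
      ∑' n, ⨆ _ : (t n).Nonempty, ediam (t n) ^ (1 / 2 : ℝ)) 1 one_pos).trans_lt hW
  simp only [iInf_lt_iff] at hcover
  obtain ⟨t, hWt, -, hsum⟩ := hcover
  obtain ⟨ε, hε, hεsum⟩ :=
    ENNReal.exists_pos_sum_of_countable' (tsub_pos_of_lt hsum).ne' ℕ
  choose a n hsub hle using fun i => exists_cylinder_superset (t i) (hε i)
  refine ⟨a, n, hWt.trans (iUnion_mono hsub), (ENNReal.tsum_le_tsum hle).trans_lt ?_⟩
  rw [ENNReal.tsum_add, add_comm]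
  exact lt_tsub_iff_right.1 hεsum

/-- If the `(1/2)`-dimensional Hausdorff measure of `W` is `< √(1/2)` then Player II has a
winning pure strategy in the binary Gale–Stewart game with target set `W`; in particular the
game is determined. -/
theorem playerII_wins_of_hausdorffMeasure_lt (W : Set (ℕ → Bool))
    (hW : μH[(1 / 2 : ℝ)] W < ENNReal.ofReal (Real.sqrt (1 / 2))) :
    (∃ sII : List Bool → Bool, ∀ x : ℕ → Bool, ConsistentII sII x → x ∉ W) ∧
    ((∃ sI : List Bool → Bool, ∀ x : ℕ → Bool, ConsistentI sI x → x ∈ W) ∨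
      (∃ sII : List Bool → Bool, ∀ x : ℕ → Bool, ConsistentII sII x → x ∉ W)) := by
  obtain ⟨a, n, hWa, hsum⟩ := exists_cover_of_hausdorffMeasure_lt hW
  obtain ⟨sII, hsII⟩ := exists_strategy_avoiding_cylinders a n hsum
  have hwin : ∃ sII : List Bool → Bool, ∀ x : ℕ → Bool, ConsistentII sII x → x ∉ W := by
    refine ⟨sII, fun x hx hxW => ?_⟩
    obtain ⟨i, hi⟩ := mem_iUnion.1 (hWa hxW)
    exact hsII x hx i hi
  exact ⟨hwin, Or.inr hwin⟩
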